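/- Let Q be a cube in ℝⁿ and let {α_R}_{R ∈ D(Q)} be nonnegative numbers. Suppose there exist C > 0 and 0 < δ ≤ 1 such that for every Q' ∈ D(Q): ∑_{R ∈ D(Q')} α_R^δ |R| ≤ C α_{Q'}^δ |Q'|. Then there exists a (1/2)-sparse family F ⊂ D(Q) such that for a.e. x ∈ Q: ∑_{R ∈ D(Q)} α_R χ_R(x) ≲ C^{1/δ} ∑_{P ∈ F} α_P χ_P(x), with implicit constant depending only on n and δ. -/

import Mathlib

open MeasureTheory ENNReal Filter

/-- An axis-parallel cube in `ℝⁿ`, given by its lower-left corner and (positive) side length. -/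
structure DyCube (n : ℕ) where
  corner : Fin n → ℝ
  side : ℝ
  side_pos : 0 < side

namespace DyCube

/-- The set of points of a cube (half-open, so that dyadic children tile it exactly). -/
def set {n : ℕ} (Q : DyCube n) : Set (Fin n → ℝ) :=
  Set.univ.pi fun i => Set.Ico (Q.corner i) (Q.corner i + Q.side)

/-- `P.IsDyadicSub Q` : `P` is a dyadic subcube of `Q`, obtained by `k` successive
dyadic subdivisions of `Q`. -/
def IsDyadicSub {n : ℕ} (P Q : DyCube n) : Prop :=
  ∃ k : ℕ, ∃ m : Fin n → ℕ, (∀ i, m i < 2 ^ k) ∧ P.side = Q.side / 2 ^ k ∧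
    ∀ i, P.corner i = Q.corner i + m i * (Q.side / 2 ^ k)

end DyCube

/-- `Ω_k`, the union of the cubes of the `k`-th generation of a family. -/
def genUnion {n : ℕ} (F : ℕ → Set (DyCube n)) (k : ℕ) : Set (Fin n → ℝ) :=
  ⋃ P ∈ F k, P.set

/-- A contracting family of dyadic subcubes of `Q`: generations `F k` of pairwise disjoint
dyadic subcubes, starting from `F 0 = {Q}`, with decreasing unions whose measures tend to `0`. -/
structure ContractingFamily {n : ℕ} (Q : DyCube n) (F : ℕ → Set (DyCube n)) : Prop where
  zero : F 0 = {Q}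
  dyadic : ∀ k, ∀ P ∈ F k, P.IsDyadicSub Q
  disj : ∀ k, (F k).PairwiseDisjoint DyCube.set
  nested : ∀ k, genUnion F (k + 1) ⊆ genUnion F k
  vanish : Tendsto (fun k => volume (genUnion F k)) atTop (nhds 0)

/-- An `η`-sparse family: a contracting family such that each cube `P ∈ F k` satisfies
`|E_P| ≥ η |P|`, where `E_P = P \ Ω_{k+1}`. -/
def IsSparseFamily {n : ℕ} (η : ℝ) (Q : DyCube n) (F : ℕ → Set (DyCube n)) : Prop :=
  ContractingFamily Q F ∧
    ∀ k, ∀ P ∈ F k, ENNReal.ofReal η * volume P.set ≤ volume (P.set \ genUnion F (k + 1))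


/-! ### The combinatorial part: stopping times along a sequence -/

/-- `SeqStop K δ i b j`: the `i`-th stopping time of the sequence `b` equals `j`. -/
def SeqStop (K δ : ℝ) : ℕ → (ℕ → ℝ) → ℕ → Prop
  | 0, _, j => j = 0
  | i + 1, b, j => ∃ j0 < j, SeqStop K δ i b j0 ∧
      K * b j0 ^ δ < ∑ l ∈ Finset.Icc j0 j, b l ^ δ ∧
      ∀ l, j0 ≤ l → l < j → ∑ l ∈ Finset.Icc j0 l, b l ^ δ ≤ K * b j0 ^ δ

theorem SeqStop.congr {K δ : ℝ} {b b' : ℕ → ℝ} :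
    ∀ {i j : ℕ}, (∀ l ≤ j, b l = b' l) → SeqStop K δ i b j → SeqStop K δ i b' j
  | 0, j, _, h => h
  | i + 1, j, hb, ⟨j0, hj, h0, h1, h2⟩ => by
    have hs : ∀ l ≤ j, ∑ l ∈ Finset.Icc j0 l, b l ^ δ = ∑ l ∈ Finset.Icc j0 l, b' l ^ δ := by
      intro l hl
      apply Finset.sum_congr rfl
      intro t ht
      rw [hb t ((Finset.mem_Icc.1 ht).2.trans hl)]
    refine ⟨j0, hj, SeqStop.congr (fun l hl => hb l (hl.trans hj.le)) h0, ?_, ?_⟩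
    · rw [← hs j le_rfl, ← hb j0 hj.le]; exact h1
    · intro l hl hl'
      rw [← hs l hl'.le, ← hb j0 hj.le]; exact h2 l hl hl'

theorem SeqStop.unique {K δ : ℝ} {b : ℕ → ℝ} :
    ∀ {i j j' : ℕ}, SeqStop K δ i b j → SeqStop K δ i b j' → j = j'
  | 0, j, j', h, h' => Eq.trans h (Eq.symm h')
  | i + 1, j, j', ⟨j0, hj, h0, h1, h2⟩, ⟨j0', hj', h0', h1', h2'⟩ => by
    obtain rfl := SeqStop.unique h0 h0'
    rcases lt_trichotomy j j' with h | h | h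
    · exact absurd (h2' j hj.le h) (not_le.2 h1)
    · exact h
    · exact absurd (h2 j' hj'.le h) (not_le.2 h1')

theorem sum_le_of_sum_rpow_le {δ K B : ℝ} (hδ0 : 0 < δ) (hδ1 : δ ≤ 1) (hK : 0 ≤ K) (hB : 0 ≤ B)
    {b : ℕ → ℝ} (hb : ∀ l, 0 ≤ b l) (s : Finset ℕ) (h : ∑ l ∈ s, b l ^ δ ≤ K * B ^ δ) :
    ∑ l ∈ s, b l ≤ K ^ (1 / δ) * B := by
  have h1 : (∑ l ∈ s, b l) ^ δ ≤ ∑ l ∈ s, b l ^ δ := by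
    clear h
    induction s using Finset.cons_induction with
    | empty => simp [Real.zero_rpow hδ0.ne']
    | cons t s ht ih =>
      rw [Finset.sum_cons, Finset.sum_cons]
      refine (Real.rpow_add_le_add_rpow (hb t) (Finset.sum_nonneg fun l _ => hb l) hδ0.le hδ1).trans ?_
      gcongr
  have h0 : 0 ≤ ∑ l ∈ s, b l := Finset.sum_nonneg fun l _ => hb l
  have h2 := Real.rpow_le_rpow (Real.rpow_nonneg h0 δ) (h1.trans h) (one_div_pos.2 hδ0).le
  rw [Real.mul_rpow hK (Real.rpow_nonneg hB _), ← Real.rpow_mul h0, ← Real.rpow_mul hB,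
    mul_one_div_cancel hδ0.ne', Real.rpow_one, Real.rpow_one] at h2
  exact h2

theorem seq_aux {δ K : ℝ} (hδ0 : 0 < δ) (hδ1 : δ ≤ 1) (hK : 0 ≤ K)
    {b : ℕ → ℝ} (hb : ∀ l, 0 ≤ b l) (hK1 : ∀ l, b l ^ δ ≤ K * b l ^ δ)
    (w : ℕ → ℝ≥0∞) (hw : ∀ i j, SeqStop K δ i b j → ENNReal.ofReal (b j) ≤ w i) (N : ℕ) :
    ∀ d j i, N - j ≤ d → SeqStop K δ i b j →
      ∑ l ∈ Finset.Ico j N, ENNReal.ofReal (b l) ≤ ENNReal.ofReal (K ^ (1 / δ)) * ∑' m, w (m + i) := by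
  intro d
  induction d with
  | zero =>
    intro j i hd _
    rw [Finset.Ico_eq_empty (by omega)]; simp
  | succ d ih =>
    intro j i hd hs
    rcases Nat.lt_or_ge j N with hjN | hjN
    swap
    · rw [Finset.Ico_eq_empty (by omega)]; simp
    have key : ∀ j', j < j' → (∀ l, j ≤ l → l < j' → ∑ l ∈ Finset.Icc j l, b l ^ δ ≤ K * b j ^ δ) →
        ∑ l ∈ Finset.Ico j j', ENNReal.ofReal (b l) ≤ ENNReal.ofReal (K ^ (1 / δ)) * w i := by
      intro j' hj' h
      have h1 := h (j' - 1) (by omega) (by omega)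
      have h2 : Finset.Icc j (j' - 1) = Finset.Ico j j' := by
        ext t; simp only [Finset.mem_Icc, Finset.mem_Ico]; omega
      rw [h2] at h1
      have h3 := sum_le_of_sum_rpow_le hδ0 hδ1 hK (hb j) hb _ h1
      rw [← ENNReal.ofReal_sum_of_nonneg (fun l _ => hb l)]
      refine (ENNReal.ofReal_le_ofReal h3).trans ?_
      rw [ENNReal.ofReal_mul (Real.rpow_nonneg hK _)]
      gcongr
      exact hw i j hs
    have hsplit : ∑' m, w (m + i) = w i + ∑' m, w (m + (i + 1)) := by
      rw [tsum_eq_zero_add' ENNReal.summable]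
      simp only [zero_add, add_assoc, add_comm 1 i]
    by_cases hex : ∃ l, j ≤ l ∧ l < N ∧ K * b j ^ δ < ∑ l ∈ Finset.Icc j l, b l ^ δ
    · classical
      have hf := Nat.find_spec hex
      have hm : ∀ l, l < Nat.find hex → _ := fun l hl => Nat.find_min hex hl
      generalize Nat.find hex = j' at hf hm
      obtain ⟨h1, h2, h3⟩ := hf
      have hne : j ≠ j' := by
        rintro rfl
        simp only [Finset.Icc_self, Finset.sum_singleton] at h3
        exact absurd (hK1 j) (not_le.2 h3)
      have hlt : j < j' := by omega
      have hm' : ∀ l, j ≤ l → l < j' → ∑ l ∈ Finset.Icc j l, b l ^ δ ≤ K * b j ^ δ := by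
        intro l hl hl'
        by_contra hc
        exact hm l hl' ⟨hl, by omega, not_le.1 hc⟩
      have hs' : SeqStop K δ (i + 1) b j' := ⟨j, hlt, hs, h3, hm'⟩
      rw [← Finset.sum_Ico_consecutive _ h1 h2.le, hsplit, mul_add]
      exact add_le_add (key j' hlt hm') (ih j' (i + 1) (by omega) hs')
    · push Not at hex
      refine (key N hjN fun l h1 h2 => hex l h1 h2).trans ?_
      gcongr
      rw [hsplit]
      exact le_self_add

theorem seq_dom {δ K : ℝ} (hδ0 : 0 < δ) (hδ1 : δ ≤ 1) (hK : 0 ≤ K)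
    {b : ℕ → ℝ} (hb : ∀ l, 0 ≤ b l) (hK1 : ∀ l, b l ^ δ ≤ K * b l ^ δ)
    (w : ℕ → ℝ≥0∞) (hw : ∀ i j, SeqStop K δ i b j → ENNReal.ofReal (b j) ≤ w i) :
    ∑' l, ENNReal.ofReal (b l) ≤ ENNReal.ofReal (K ^ (1 / δ)) * ∑' m, w m := by
  rw [ENNReal.tsum_eq_iSup_nat]
  refine iSup_le fun N => ?_
  have := seq_aux hδ0 hδ1 hK hb hK1 w hw N N 0 0 (by omega) rfl
  simpa using this

/-! ### Dyadic cubes -/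

namespace DyCube

variable {n : ℕ}

/-- The dyadic subcube of `Q` of level `k` containing `x`. -/
noncomputable def at' (Q : DyCube n) (k : ℕ) (x : Fin n → ℝ) : DyCube n where
  corner i := Q.corner i + (⌊(x i - Q.corner i) / (Q.side / 2 ^ k)⌋₊ : ℝ) * (Q.side / 2 ^ k)
  side := Q.side / 2 ^ k
  side_pos := div_pos Q.side_pos (by positivity)

theorem ext' {P R : DyCube n} (h1 : ∀ i, P.corner i = R.corner i) (h2 : P.side = R.side) : P = R := by
  cases P; cases R
  simp only [mk.injEq] at *
  exact ⟨funext h1, h2⟩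

theorem mem_set {Q : DyCube n} {x : Fin n → ℝ} :
    x ∈ Q.set ↔ ∀ i, Q.corner i ≤ x i ∧ x i < Q.corner i + Q.side := by
  simp [set, Set.mem_pi]

theorem mem_at' {Q : DyCube n} {x : Fin n → ℝ} (hx : x ∈ Q.set) (k : ℕ) : x ∈ (Q.at' k x).set := by
  rw [mem_set] at *
  intro i
  have hs : 0 < Q.side / 2 ^ k := div_pos Q.side_pos (by positivity)
  have h0 : 0 ≤ (x i - Q.corner i) / (Q.side / 2 ^ k) := div_nonneg (by linarith [hx i]) hs.le
  have h1 := Nat.floor_le h0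
  have h2 := Nat.lt_floor_add_one ((x i - Q.corner i) / (Q.side / 2 ^ k))
  rw [le_div_iff₀ hs] at h1
  rw [div_lt_iff₀ hs] at h2
  simp only [at']
  constructor <;> linarith

theorem at'_isDyadicSub {Q : DyCube n} {x : Fin n → ℝ} (hx : x ∈ Q.set) (k : ℕ) :
    (Q.at' k x).IsDyadicSub Q := by
  rw [mem_set] at hx
  have hs : 0 < Q.side / 2 ^ k := div_pos Q.side_pos (by positivity)
  refine ⟨k, fun i => ⌊(x i - Q.corner i) / (Q.side / 2 ^ k)⌋₊, fun i => ?_, rfl, fun i => rfl⟩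
  have h0 : 0 ≤ (x i - Q.corner i) / (Q.side / 2 ^ k) := div_nonneg (by linarith [hx i]) hs.le
  rw [Nat.floor_lt h0, div_lt_iff₀ hs]
  push_cast
  rw [mul_div_cancel₀ _ (by positivity)]
  linarith [hx i]

theorem IsDyadicSub.eq_at' {Q R : DyCube n} (h : R.IsDyadicSub Q) {x : Fin n → ℝ} (hx : x ∈ R.set) :
    x ∈ Q.set ∧ ∃ k, R.side = Q.side / 2 ^ k ∧ R = Q.at' k x := by
  obtain ⟨k, m, hm, hs, hc⟩ := h
  rw [mem_set] at hx
  have hs0 : 0 < Q.side / 2 ^ k := div_pos Q.side_pos (by positivity)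
  refine ⟨mem_set.2 fun i => ?_, k, hs, ext' (fun i => ?_) hs⟩
  · have h1 := hx i
    rw [hc i, hs] at h1
    have h2 : (m i : ℝ) + 1 ≤ 2 ^ k := by exact_mod_cast hm i
    have h3 := mul_le_mul_of_nonneg_right h2 hs0.le
    rw [mul_div_cancel₀ _ (by positivity)] at h3
    have h4 : 0 ≤ (m i : ℝ) * (Q.side / 2 ^ k) := by positivity
    constructor <;> linarith
  · have h1 := hx i
    rw [hc i, hs] at h1
    rw [hc i]
    simp only [at']
    have : ⌊(x i - Q.corner i) / (Q.side / 2 ^ k)⌋₊ = m i := by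
      rw [Nat.floor_eq_iff (div_nonneg (by nlinarith [mul_nonneg (Nat.cast_nonneg (α := ℝ) (m i)) hs0.le]) hs0.le),
        le_div_iff₀ hs0, div_lt_iff₀ hs0]
      constructor <;> linarith
    rw [this]

theorem floor_at (Q : DyCube n) (x : Fin n → ℝ) (i : Fin n) {l k : ℕ} (h : l ≤ k) :
    ⌊(x i - Q.corner i) / (Q.side / 2 ^ l)⌋₊ =
      ⌊(x i - Q.corner i) / (Q.side / 2 ^ k)⌋₊ / 2 ^ (k - l) := by
  have := Nat.floor_div_natCast ((x i - Q.corner i) / (Q.side / 2 ^ k)) (2 ^ (k - l))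
  rw [← this]
  congr 1
  obtain ⟨d, rfl⟩ := Nat.exists_eq_add_of_le h
  have := Q.side_pos.ne'
  push_cast
  rw [Nat.add_sub_cancel_left, pow_add]
  field_simp

theorem at'_injective (Q : DyCube n) {k l : ℕ} {x y : Fin n → ℝ} (h : Q.at' k x = Q.at' l y) :
    k = l := by
  have h1 : Q.side / 2 ^ k = Q.side / 2 ^ l := congrArg side h
  have h2 : (2 : ℝ) ^ k = 2 ^ l := by
    have := Q.side_pos.ne'
    field_simp at h1
    exact h1.symm
  exact pow_right_injective₀ (by norm_num) (by norm_num) h2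

theorem at'_eq_of_mem {Q : DyCube n} {x y : Fin n → ℝ} (hx : x ∈ Q.set) {k : ℕ}
    (hy : y ∈ (Q.at' k x).set) : y ∈ Q.set ∧ ∀ l ≤ k, Q.at' l y = Q.at' l x := by
  obtain ⟨h1, k', hs, h2⟩ := (at'_isDyadicSub hx k).eq_at' hy
  obtain rfl := at'_injective Q h2
  refine ⟨h1, fun l hl => ext' (fun i => ?_) rfl⟩
  have h3 := congrFun (congrArg corner h2) i
  have hs0 : 0 < Q.side / 2 ^ k := div_pos Q.side_pos (by positivity)
  have h4 := Nat.cast_injective (mul_right_cancel₀ hs0.ne' (add_left_cancel h3))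
  simp only [at']
  rw [floor_at Q x i hl, floor_at Q y i hl, h4]

theorem at'_sub_at' (Q : DyCube n) (z : Fin n → ℝ) {j l : ℕ} (h : j ≤ l) :
    (Q.at' l z).IsDyadicSub (Q.at' j z) := by
  refine ⟨l - j, fun i => ⌊(z i - Q.corner i) / (Q.side / 2 ^ l)⌋₊ % 2 ^ (l - j),
    fun i => Nat.mod_lt _ (by positivity), ?_, fun i => ?_⟩
  · obtain ⟨d, rfl⟩ := Nat.exists_eq_add_of_le h
    simp only [at', Nat.add_sub_cancel_left, pow_add, div_div]
  · simp only [at']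
    rw [floor_at Q z i h]
    generalize ⌊(z i - Q.corner i) / (Q.side / 2 ^ l)⌋₊ = m
    have h1 : ((2 ^ (l - j) * (m / 2 ^ (l - j)) + m % 2 ^ (l - j) : ℕ) : ℝ) = m := by
      rw [Nat.div_add_mod]
    rw [← h1]
    obtain ⟨d, rfl⟩ := Nat.exists_eq_add_of_le h
    rw [Nat.add_sub_cancel_left, pow_add]
    push_cast
    field_simp
    ring

theorem at'_zero {Q : DyCube n} {x : Fin n → ℝ} (hx : x ∈ Q.set) : Q.at' 0 x = Q := by
  rw [mem_set] at hx
  refine ext' (fun i => ?_) (by simp [at'])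
  have : ⌊(x i - Q.corner i) / Q.side⌋₊ = 0 := by
    rw [Nat.floor_eq_zero, div_lt_one Q.side_pos]; linarith [hx i]
  simp [at', this]

theorem corner_mem (Q : DyCube n) : Q.corner ∈ Q.set :=
  mem_set.2 fun i => ⟨le_rfl, by linarith [Q.side_pos]⟩

theorem measurableSet_set (Q : DyCube n) : MeasurableSet Q.set :=
  MeasurableSet.univ_pi fun _ => measurableSet_Ico

theorem volume_set (Q : DyCube n) : volume Q.set = ENNReal.ofReal Q.side ^ n := by
  rw [set, Real.volume_pi_Ico]; simp

theorem volume_ne_zero (Q : DyCube n) : volume Q.set ≠ 0 := by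
  rw [volume_set]; exact pow_ne_zero _ (by simpa using Q.side_pos)

theorem volume_ne_top (Q : DyCube n) : volume Q.set ≠ ⊤ := by
  rw [volume_set]; exact ENNReal.pow_ne_top ENNReal.ofReal_ne_top

theorem countable_sub (Q : DyCube n) : {R : DyCube n | R.IsDyadicSub Q}.Countable := by
  have : {R : DyCube n | R.IsDyadicSub Q} ⊆ Set.range (fun p : ℕ × (Fin n → ℕ) =>
      (⟨fun i => Q.corner i + p.2 i * (Q.side / 2 ^ p.1), Q.side / 2 ^ p.1,
        div_pos Q.side_pos (by positivity)⟩ : DyCube n)) := by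
    rintro R ⟨k, m, _, hs, hc⟩
    exact ⟨(k, m), ext' (fun i => (hc i).symm) hs.symm⟩
  exact (Set.countable_range _).mono this

end DyCube

/-! ### The sparse family -/

section SparseConstruction

variable {n : ℕ}

/-- The `i`-th generation of stopping cubes. -/
def stopFam (K δ : ℝ) (Q : DyCube n) (a : DyCube n → ℝ) (i : ℕ) : Set (DyCube n) :=
  {P | ∃ x ∈ Q.set, ∃ j, SeqStop K δ i (fun l => a (Q.at' l x)) j ∧ P = Q.at' j x}

theorem stopFam_mem {K δ : ℝ} {Q : DyCube n} {a : DyCube n → ℝ} {i : ℕ} {P : DyCube n}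
    (hP : P ∈ stopFam K δ Q a i) {z : Fin n → ℝ} (hz : z ∈ P.set) :
    z ∈ Q.set ∧ ∃ j, SeqStop K δ i (fun l => a (Q.at' l z)) j ∧ P = Q.at' j z := by
  obtain ⟨x, hx, j, hs, rfl⟩ := hP
  obtain ⟨h1, h2⟩ := DyCube.at'_eq_of_mem hx hz
  refine ⟨h1, j, hs.congr fun l hl => ?_, (h2 j le_rfl).symm⟩
  simp only [h2 l hl]

theorem mem_genUnion {K δ : ℝ} {Q : DyCube n} {a : DyCube n → ℝ} {i : ℕ} {z : Fin n → ℝ} :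
    z ∈ genUnion (stopFam K δ Q a) i ↔
      z ∈ Q.set ∧ ∃ j, SeqStop K δ i (fun l => a (Q.at' l z)) j := by
  simp only [genUnion, Set.mem_iUnion, exists_prop]
  constructor
  · rintro ⟨P, hP, hz⟩
    obtain ⟨h1, j, h2, _⟩ := stopFam_mem hP hz
    exact ⟨h1, j, h2⟩
  · rintro ⟨h1, j, h2⟩
    exact ⟨Q.at' j z, ⟨z, h1, j, h2, rfl⟩, DyCube.mem_at' h1 j⟩

theorem stopFam_dyadic {K δ : ℝ} {Q : DyCube n} {a : DyCube n → ℝ} {i : ℕ} {P : DyCube n}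
    (hP : P ∈ stopFam K δ Q a i) : P.IsDyadicSub Q := by
  obtain ⟨x, hx, j, hs, rfl⟩ := hP
  exact DyCube.at'_isDyadicSub hx j

theorem stopFam_countable (K δ : ℝ) (Q : DyCube n) (a : DyCube n → ℝ) (i : ℕ) :
    (stopFam K δ Q a i).Countable :=
  Q.countable_sub.mono fun _ hP => stopFam_dyadic hP

theorem stopFam_disj (K δ : ℝ) (Q : DyCube n) (a : DyCube n → ℝ) (i : ℕ) :
    (stopFam K δ Q a i).PairwiseDisjoint DyCube.set := by
  intro P hP R hR hne
  refine Set.disjoint_left.2 fun z hz hz' => hne ?_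
  obtain ⟨_, j, h1, h2⟩ := stopFam_mem hP hz
  obtain ⟨_, j', h1', h2'⟩ := stopFam_mem hR hz'
  rw [h2, h2', h1.unique h1']

theorem genUnion_measurable (K δ : ℝ) (Q : DyCube n) (a : DyCube n → ℝ) (i : ℕ) :
    MeasurableSet (genUnion (stopFam K δ Q a) i) :=
  MeasurableSet.biUnion (stopFam_countable K δ Q a i) fun P _ => P.measurableSet_set

theorem genUnion_nested (K δ : ℝ) (Q : DyCube n) (a : DyCube n → ℝ) (i : ℕ) :
    genUnion (stopFam K δ Q a) (i + 1) ⊆ genUnion (stopFam K δ Q a) i := by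
  intro z hz
  rw [mem_genUnion] at *
  obtain ⟨h1, j, j0, _, h2, _⟩ := hz
  exact ⟨h1, j0, h2⟩

theorem stopFam_half {δ C : ℝ} {Q : DyCube n} {a : DyCube n → ℝ} (hδ0 : 0 < δ)
    (ha : ∀ R, 0 ≤ a R) (hC : 0 < C)
    (H : ∀ Q' : DyCube n, Q'.IsDyadicSub Q →
          ∑' R : {R : DyCube n // R.IsDyadicSub Q'},
              ENNReal.ofReal (a (R : DyCube n) ^ δ) * volume (R : DyCube n).set ≤
            ENNReal.ofReal (C * a Q' ^ δ) * volume Q'.set)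
    {i : ℕ} {P : DyCube n} (hP : P ∈ stopFam (2 * C) δ Q a i) :
    2 * volume (P.set ∩ genUnion (stopFam (2 * C) δ Q a) (i + 1)) ≤ volume P.set := by
  have hHP := H P (stopFam_dyadic hP)
  -- the localized sum
  let g : (Fin n → ℝ) → ℝ≥0∞ := fun x => ∑' R : {R : DyCube n // R.IsDyadicSub P},
    (R : DyCube n).set.indicator (fun _ => ENNReal.ofReal (a (R : DyCube n) ^ δ)) x
  have hcount : Countable {R : DyCube n // R.IsDyadicSub P} := P.countable_sub.to_subtype
  have hgm : Measurable g :=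
    Measurable.ennreal_tsum fun R => measurable_const.indicator R.1.measurableSet_set
  have hgi : ∫⁻ x, g x ≤ ENNReal.ofReal (C * a P ^ δ) * volume P.set := by
    refine le_trans (le_of_eq ?_) hHP
    rw [lintegral_tsum fun R => (measurable_const.indicator R.1.measurableSet_set).aemeasurable]
    refine tsum_congr fun R => ?_
    rw [lintegral_indicator_const R.1.measurableSet_set]
  have hpt : ∀ z ∈ P.set ∩ genUnion (stopFam (2 * C) δ Q a) (i + 1),
      ENNReal.ofReal (2 * C * a P ^ δ) < g z := by
    rintro z ⟨hz, hz'⟩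
    obtain ⟨hzQ, j, hs, hPj⟩ := stopFam_mem hP hz
    obtain ⟨_, j', j0, hlt, hs0, hbig, _⟩ := mem_genUnion.1 hz'
    obtain rfl := hs.unique hs0
    simp only [← hPj] at hbig
    have h0 : ∀ R, 0 ≤ a R ^ δ := fun R => Real.rpow_nonneg (ha R) δ
    have hpos : 0 ≤ 2 * C * a P ^ δ := mul_nonneg (by positivity) (h0 P)
    refine lt_of_lt_of_le ((ENNReal.ofReal_lt_ofReal_iff (lt_of_le_of_lt hpos hbig)).2 hbig) ?_
    rw [ENNReal.ofReal_sum_of_nonneg fun l _ => h0 _]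
    let e : Finset.Icc j j' → {R : DyCube n // R.IsDyadicSub P} := fun l =>
      ⟨Q.at' l z, hPj ▸ DyCube.at'_sub_at' Q z (Finset.mem_Icc.1 l.2).1⟩
    have he : Function.Injective e := fun l l' h =>
      Subtype.ext (DyCube.at'_injective Q (congrArg Subtype.val h))
    refine le_trans (le_of_eq ?_) (ENNReal.tsum_comp_le_tsum_of_injective he _)
    rw [tsum_fintype, ← Finset.sum_coe_sort]
    refine Finset.sum_congr rfl fun l _ => ?_
    rw [Set.indicator_of_mem (DyCube.mem_at' hzQ l)]
  rcases (ha P).eq_or_lt with h | h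
  · have hz : ∀ R : {R : DyCube n // R.IsDyadicSub P}, ENNReal.ofReal (a (R : DyCube n) ^ δ) = 0 := by
      rw [← h, Real.zero_rpow hδ0.ne', mul_zero, ENNReal.ofReal_zero, zero_mul] at hHP
      intro R
      have := ENNReal.tsum_eq_zero.1 (le_antisymm hHP zero_le) R
      exact (mul_eq_zero.1 this).resolve_right R.1.volume_ne_zero
    have hempty : P.set ∩ genUnion (stopFam (2 * C) δ Q a) (i + 1) = ∅ := by
      refine Set.eq_empty_of_forall_notMem fun z hz' => ?_
      have h1 := hpt z hz'
      have h2 : g z = 0 := by simp [g, hz]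
      rw [h2] at h1
      exact not_lt_bot h1
    rw [hempty]; simp
  · have hd : 0 < C * a P ^ δ := mul_pos hC (Real.rpow_pos_of_pos h δ)
    have h1 := mul_meas_ge_le_lintegral (μ := volume) hgm (ENNReal.ofReal (2 * C * a P ^ δ))
    have h2 : volume (P.set ∩ genUnion (stopFam (2 * C) δ Q a) (i + 1)) ≤
        volume {x | ENNReal.ofReal (2 * C * a P ^ δ) ≤ g x} :=
      measure_mono fun z hz => (hpt z hz).le
    have h3 : ENNReal.ofReal (2 * C * a P ^ δ) = ENNReal.ofReal (C * a P ^ δ) * 2 := by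
      rw [mul_assoc, mul_comm 2, ENNReal.ofReal_mul hd.le]; simp
    have h4 := (mul_le_mul_right h2 (ENNReal.ofReal (2 * C * a P ^ δ))).trans (h1.trans hgi)
    rw [h3, mul_assoc] at h4
    exact (ENNReal.mul_le_mul_iff_right (by simpa using hd) ENNReal.ofReal_ne_top).1 h4

end SparseConstruction

/-- Sparse domination for dyadic sums: if `∑_{R ∈ D(Q')} α_R^δ |R| ≤ C α_{Q'}^δ |Q'|` for every
dyadic subcube `Q'` of `Q`, then there is a `(1/2)`-sparse family `F ⊆ D(Q)` with
`∑_{R ∈ D(Q)} α_R χ_R ≲ C^{1/δ} ∑_{P ∈ F} α_P χ_P` a.e. on `Q`, the implicit constant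
depending only on `n` and `δ`. -/
theorem stmt5 {n : ℕ} (δ : ℝ) (hδ0 : 0 < δ) (hδ1 : δ ≤ 1) :
    ∃ c : ℝ, 0 < c ∧
      ∀ (Q : DyCube n) (a : DyCube n → ℝ), (∀ R, 0 ≤ a R) → ∀ C : ℝ, 0 < C →
        (∀ Q' : DyCube n, Q'.IsDyadicSub Q →
          ∑' R : {R : DyCube n // R.IsDyadicSub Q'},
              ENNReal.ofReal (a (R : DyCube n) ^ δ) * volume (R : DyCube n).set ≤
            ENNReal.ofReal (C * a Q' ^ δ) * volume Q'.set) →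
        ∃ F : ℕ → Set (DyCube n), IsSparseFamily (1 / 2) Q F ∧
          ∀ᵐ x ∂volume, x ∈ Q.set →
            ∑' R : {R : DyCube n // R.IsDyadicSub Q},
                (R : DyCube n).set.indicator (fun _ => ENNReal.ofReal (a (R : DyCube n))) x ≤
              ENNReal.ofReal (c * C ^ (1 / δ)) *
                ∑' k : ℕ, ∑' P : F k,
                  (P : DyCube n).set.indicator (fun _ => ENNReal.ofReal (a (P : DyCube n))) x := by
  refine ⟨2 ^ (1 / δ), by positivity, fun Q a ha C hC H => ?_⟩
  have hhalf := fun i P (hP : P ∈ stopFam (2 * C) δ Q a i) => stopFam_half hδ0 ha hC H hP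
  have hstep : ∀ i, 2 * volume (genUnion (stopFam (2 * C) δ Q a) (i + 1)) ≤
      volume (genUnion (stopFam (2 * C) δ Q a) i) := by
    intro i
    have hc := stopFam_countable (2 * C) δ Q a i
    have : Countable (stopFam (2 * C) δ Q a i) := hc.to_subtype
    have h1 : volume (genUnion (stopFam (2 * C) δ Q a) i) =
        ∑' P : stopFam (2 * C) δ Q a i, volume P.1.set :=
      measure_biUnion hc (stopFam_disj _ _ _ _ _) fun P _ => P.measurableSet_set
    have h2 : genUnion (stopFam (2 * C) δ Q a) (i + 1) ⊆ ⋃ P : stopFam (2 * C) δ Q a i,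
        P.1.set ∩ genUnion (stopFam (2 * C) δ Q a) (i + 1) := by
      intro z hz
      have := genUnion_nested _ _ _ _ _ hz
      simp only [genUnion, Set.mem_iUnion, exists_prop] at this
      obtain ⟨P, hP, hzP⟩ := this
      exact Set.mem_iUnion.2 ⟨⟨P, hP⟩, hzP, hz⟩
    have h3 := (measure_mono (μ := volume) h2).trans (measure_iUnion_le _)
    rw [h1]
    refine (mul_le_mul_right h3 2).trans ?_
    rw [← ENNReal.tsum_mul_left]
    exact ENNReal.tsum_le_tsum fun P => hhalf i P.1 P.2
  have hzero : stopFam (2 * C) δ Q a 0 = {Q} := by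
    ext P
    simp only [stopFam, SeqStop, Set.mem_setOf_eq, exists_eq_left, Set.mem_singleton_iff]
    constructor
    · rintro ⟨x, hx, rfl⟩
      exact DyCube.at'_zero hx
    · rintro rfl
      exact ⟨P.corner, P.corner_mem, (DyCube.at'_zero P.corner_mem).symm⟩
  refine ⟨stopFam (2 * C) δ Q a, ⟨⟨hzero, fun k P hP => stopFam_dyadic hP,
    stopFam_disj _ _ _ _, genUnion_nested _ _ _ _, ?_⟩, ?_⟩, ?_⟩
  · have hgeo : ∀ i, volume (genUnion (stopFam (2 * C) δ Q a) i) ≤ volume Q.set * 2⁻¹ ^ i := by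
      intro i
      induction i with
      | zero => simp [genUnion, hzero]
      | succ i ih =>
        have h := (hstep i).trans ih
        rw [mul_comm, ← ENNReal.le_div_iff_mul_le (by simp) (by simp)] at h
        refine h.trans (le_of_eq ?_)
        rw [pow_succ, ENNReal.div_eq_inv_mul]; ring
    have hlim : Tendsto (fun i : ℕ => volume Q.set * (2⁻¹ : ℝ≥0∞) ^ i) atTop (nhds (volume Q.set * 0)) :=
      ENNReal.Tendsto.const_mul
        (ENNReal.tendsto_pow_atTop_nhds_zero_of_lt_one (by simp)) (Or.inr Q.volume_ne_top)
    rw [mul_zero] at hlim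
    exact tendsto_of_tendsto_of_tendsto_of_le_of_le tendsto_const_nhds hlim (fun _ => zero_le) hgeo
  · intro k P hP
    have h1 := hhalf k P hP
    have h2 := measure_inter_add_diff (μ := volume) P.set (genUnion_measurable (2 * C) δ Q a (k + 1))
    have h3 : ENNReal.ofReal (1 / 2) = 2⁻¹ := by
      rw [one_div, ENNReal.ofReal_inv_of_pos (by norm_num)]; simp
    rw [h3, ← ENNReal.div_eq_inv_mul]
    have hfin : volume (P.set ∩ genUnion (stopFam (2 * C) δ Q a) (k + 1)) ≠ ⊤ :=
      ne_top_of_le_ne_top P.volume_ne_top (measure_mono Set.inter_subset_left)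
    refine ENNReal.div_le_of_le_mul ?_
    rw [← h2, two_mul] at h1
    have h4 := (ENNReal.add_le_add_iff_left hfin).1 h1
    rw [← h2, mul_two]
    gcongr
  · refine Filter.Eventually.of_forall fun x hx => ?_
    let e : ℕ → {R : DyCube n // R.IsDyadicSub Q} := fun l =>
      ⟨Q.at' l x, DyCube.at'_isDyadicSub hx l⟩
    have he : Function.Injective e := fun l l' h =>
      DyCube.at'_injective Q (congrArg Subtype.val h)
    rw [← he.tsum_eq]
    swap
    · intro R hR
      have hxR : x ∈ R.1.set := by
        by_contra hc
        exact hR (Set.indicator_of_notMem hc _)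
      obtain ⟨_, k, _, hk⟩ := R.2.eq_at' hxR
      exact ⟨k, Subtype.ext hk.symm⟩
    have hl : ∀ l, (e l).1.set.indicator (fun _ => ENNReal.ofReal (a (e l).1)) x =
        ENNReal.ofReal (a (Q.at' l x)) := fun l =>
      Set.indicator_of_mem (DyCube.mem_at' hx l) _
    simp only [hl]
    rw [← Real.mul_rpow (by norm_num) hC.le]
    refine seq_dom hδ0 hδ1 (by positivity) (fun l => ha _) ?_ _ ?_
    · intro l
      have hd := DyCube.at'_isDyadicSub hx l
      generalize Q.at' l x = P at hd
      have h0 : 0 ≤ a P ^ δ := Real.rpow_nonneg (ha P) δ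
      have hself : P.IsDyadicSub P := by
        have := DyCube.at'_isDyadicSub P.corner_mem 0
        rwa [DyCube.at'_zero P.corner_mem] at this
      have h1 := (ENNReal.le_tsum (f := fun R : {R : DyCube n // R.IsDyadicSub P} =>
        ENNReal.ofReal (a (R : DyCube n) ^ δ) * volume (R : DyCube n).set) ⟨P, hself⟩).trans (H P hd)
      have h2 := (ENNReal.mul_le_mul_iff_left P.volume_ne_zero P.volume_ne_top).1 h1
      have h3 := (ENNReal.ofReal_le_ofReal_iff (mul_nonneg hC.le h0)).1 h2
      nlinarith [mul_nonneg hC.le h0]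
    · intro i j hs
      have h1 := ENNReal.le_tsum (f := fun P : stopFam (2 * C) δ Q a i =>
        (P : DyCube n).set.indicator (fun _ => ENNReal.ofReal (a (P : DyCube n))) x)
        ⟨Q.at' j x, x, hx, j, hs, rfl⟩
      refine le_trans (le_of_eq ?_) h1
      simp only [Set.indicator_of_mem (DyCube.mem_at' hx j)]
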